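/- arXiv:0902.1502 — 2 statements merged into one kernel-verified Lean document; each statement's English description precedes it below -/
import Mathlib

section
/- A 4×4 real symmetric matrix V satisfies V + iΩ ≥ 0 if and only if V > 0, det V ≥ 1, and Δ(V) ≤ 1 + det V, where Δ(V) = det A + det B + 2 det C for the 2×2 block decomposition V = [[A,C],[C^T,B]]. -/
open Matrix
open scoped ComplexOrder

def omega2 : Matrix (Fin 2) (Fin 2) ℝ := !![0, 1; -1, 0]

/-- The two-mode symplectic form Ω = ω ⊕ ω, in block form. -/
def Omega2mode : Matrix (Fin 2 ⊕ Fin 2) (Fin 2 ⊕ Fin 2) ℝ :=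
  Matrix.fromBlocks omega2 0 0 omega2

noncomputable def cplx {ι : Type*} (M : Matrix ι ι ℝ) : Matrix ι ι ℂ :=
  M.map Complex.ofReal

def eqv4 : Fin 4 ≃ Fin 2 ⊕ Fin 2 := (finSumFinEquiv (m := 2) (n := 2)).symm

lemma det4 {R : Type*} [CommRing R] (M : Matrix (Fin 2 ⊕ Fin 2) (Fin 2 ⊕ Fin 2) R) :
    M.det = (M.submatrix eqv4 eqv4).det :=
  (Matrix.det_submatrix_equiv_self _ _).symm

lemma fs0 : eqv4 0 = Sum.inl 0 := rfl
lemma fs1 : eqv4 1 = Sum.inl 1 := rfl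
lemma fs2 : eqv4 2 = Sum.inr 0 := rfl
lemma fs3 : eqv4 3 = Sum.inr 1 := rfl

set_option maxHeartbeats 1000000 in
lemma detform (A B C : Matrix (Fin 2) (Fin 2) ℝ)
    (hA : Aᵀ = A) (hB : Bᵀ = B) (t : ℝ) :
    ((t : ℂ) • cplx (Matrix.fromBlocks A C Cᵀ B) + Complex.I • cplx Omega2mode).det
     = ((t^4 * (Matrix.fromBlocks A C Cᵀ B).det - t^2 * (A.det + B.det + 2 * C.det) + 1 : ℝ) : ℂ) := by
  have a : A 1 0 = A 0 1 := congrFun (congrFun hA 0) 1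
  have b : B 1 0 = B 0 1 := congrFun (congrFun hB 0) 1
  have s2 : Fin.succAbove (1 : Fin 4) (2 : Fin 3) = 3 := rfl
  have s4 : Fin.succAbove (2 : Fin 4) (2 : Fin 3) = 3 := rfl
  have s6 : Fin.succAbove (3 : Fin 4) (2 : Fin 3) = 2 := rfl
  have s7 : Fin.succ (2 : Fin 3) = 3 := rfl
  have I2 := Complex.I_sq
  have I4 := Complex.I_pow_four
  rw [det4, det4, Matrix.det_succ_row_zero, Matrix.det_succ_row_zero]
  simp [Fin.sum_univ_succ, Matrix.det_fin_three, Matrix.det_fin_two, s2,s4,s6,s7,fs0,fs1,fs2,fs3,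
    cplx, Omega2mode, omega2, a, b]
  ring_nf
  simp only [I2, I4]
  ring

open scoped MatrixOrder Matrix.Norms.L2Operator in
lemma psd_factor {n : Type*} [Fintype n] [DecidableEq n] {V : Matrix n n ℝ} (h : V.PosSemidef) :
    ∃ B : Matrix n n ℝ, V = Bᵀ * B := by
  obtain ⟨B, hB⟩ := CStarAlgebra.nonneg_iff_eq_star_mul_self.mp h.nonneg
  exact ⟨B, by rw [hB, star_eq_conjTranspose, conjTranspose_eq_transpose_of_trivial]⟩

lemma cplx_conjTranspose {n : Type*} (V : Matrix n n ℝ) : (cplx V)ᴴ = cplx Vᵀ := by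
  ext i j; simp [cplx]

lemma cplx_mul {n : Type*} [Fintype n] (V W : Matrix n n ℝ) : cplx (V * W) = cplx V * cplx W := by
  ext i j; simp [cplx, Matrix.mul_apply]

/-- Complex normalisation of a real positive definite matrix. -/
lemma pd_normal {n : Type*} [Fintype n] [DecidableEq n] {V : Matrix n n ℝ} (h : V.PosDef) :
    ∃ P Q : Matrix n n ℂ, P * Q = 1 ∧ Q * P = 1 ∧ cplx V = Pᴴ * P := by
  obtain ⟨B, hB⟩ := psd_factor h.posSemidef
  have hd : B.det ≠ 0 := by
    intro h0
    have := h.det_pos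
    rw [hB, det_mul, h0] at this
    simp at this
  have h1 : cplx (1 : Matrix n n ℝ) = 1 := by
    ext i j; by_cases hij : i = j <;> simp [cplx, Matrix.one_apply, hij]
  have hu : IsUnit B.det := isUnit_iff_ne_zero.mpr hd
  refine ⟨cplx B, cplx B⁻¹, ?_, ?_, ?_⟩
  · rw [← cplx_mul, Matrix.mul_nonsing_inv _ hu, h1]
  · rw [← cplx_mul, Matrix.nonsing_inv_mul _ hu, h1]
  · rw [hB, cplx_mul, cplx_conjTranspose]

lemma Omega_T : Omega2modeᵀ = -Omega2mode := by
  ext i j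
  rcases i with i | i <;> rcases j with j | j <;> fin_cases i <;> fin_cases j <;>
    simp [Omega2mode, omega2]

lemma J_herm : (Complex.I • cplx Omega2mode).IsHermitian := by
  rw [Matrix.IsHermitian, conjTranspose_smul, cplx_conjTranspose, Omega_T]
  ext i j; simp [cplx]

lemma J_T : (Complex.I • cplx Omega2mode)ᵀ = -(Complex.I • cplx Omega2mode) := by
  have h : (cplx Omega2mode)ᵀ = cplx Omega2modeᵀ := rfl
  rw [transpose_smul, h, Omega_T]
  ext i j; simp [cplx]

lemma norm_J {n : Type*} [Fintype n] [DecidableEq n] {W J P Q : Matrix n n ℂ}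
    (hPQ : P * Q = 1) (hW : W = Pᴴ * P) (t : ℂ) :
    Qᴴ * (t • W + J) * Q = t • (1 : Matrix n n ℂ) + Qᴴ * J * Q := by
  have h1 : Qᴴ * W * Q = 1 := by
    rw [hW, ← Matrix.mul_assoc, ← conjTranspose_mul, hPQ, Matrix.mul_assoc, hPQ]; simp
  rw [Matrix.mul_add, Matrix.add_mul, Matrix.mul_smul, Matrix.smul_mul, h1]

lemma det_of_eig {n : Type*} [Fintype n] [DecidableEq n] {N : Matrix n n ℂ} (hN : N.IsHermitian)
    (i : n) : (((-hN.eigenvalues i : ℝ) : ℂ) • (1 : Matrix n n ℂ) + N).det = 0 := by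
  rw [← Matrix.exists_mulVec_eq_zero_iff]
  refine ⟨⇑(hN.eigenvectorBasis i), ?_, ?_⟩
  · intro h
    apply hN.eigenvectorBasis.orthonormal.ne_zero i
    ext j
    exact congrFun h j
  · rw [Matrix.add_mulVec, hN.mulVec_eigenvectorBasis, Matrix.smul_mulVec, Matrix.one_mulVec]
    ext j
    simp

lemma backward (A B C : Matrix (Fin 2) (Fin 2) ℝ)
    (hA : Aᵀ = A) (hB : Bᵀ = B) (hV : (Matrix.fromBlocks A C Cᵀ B).PosDef)
    (h1 : 1 ≤ (Matrix.fromBlocks A C Cᵀ B).det)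
    (h2 : A.det + B.det + 2 * C.det ≤ 1 + (Matrix.fromBlocks A C Cᵀ B).det) :
    (cplx (Matrix.fromBlocks A C Cᵀ B) + Complex.I • cplx Omega2mode).PosSemidef := by
  obtain ⟨P, Q, hPQ, hQP, hW⟩ := pd_normal hV
  have hf := detform A B C hA hB
  have hJ := J_herm
  set V := Matrix.fromBlocks A C Cᵀ B
  set J := Complex.I • cplx Omega2mode
  have hM : (Qᴴ * J * Q).IsHermitian := isHermitian_conjTranspose_mul_mul Q hJ
  have hN : (1 + Qᴴ * J * Q).IsHermitian := isHermitian_one.add hM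
  have hp : (1 + Qᴴ * J * Q).PosSemidef := by
    rw [hN.posSemidef_iff_eigenvalues_nonneg]
    intro i
    by_contra hlt
    have hlt : hN.eigenvalues i < 0 := not_le.mp hlt
    have hd := det_of_eig hN i
    set μ := hN.eigenvalues i
    have e : ((-μ : ℝ) : ℂ) • (1 : Matrix _ _ ℂ) + (1 + Qᴴ * J * Q)
        = Qᴴ * (((1 - μ : ℝ) : ℂ) • cplx V + J) * Q := by
      rw [norm_J hPQ hW, ← add_assoc]
      congr 1
      push_cast
      rw [sub_smul, neg_smul, one_smul]; abel
    have hq : Q.det ≠ 0 := by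
      intro h0
      have := congrArg Matrix.det hPQ
      simp [h0] at this
    rw [e, det_mul, det_mul, hf, det_conjTranspose] at hd
    have h0 : ((1-μ)^4 * V.det - (1-μ)^2 * (A.det + B.det + 2 * C.det) + 1 : ℝ) = 0 := by
      have hs : star Q.det ≠ 0 := star_ne_zero.mpr hq
      have := (mul_eq_zero.mp ((mul_eq_zero.mp hd).resolve_right hq)).resolve_left hs
      exact_mod_cast this
    have hs : 1 < (1-μ)^2 := by nlinarith
    have : 0 < ((1-μ)^2 * V.det - 1) * ((1-μ)^2 - 1) := by
      apply mul_pos <;> nlinarith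
    nlinarith
  have := hp.conjTranspose_mul_mul_same P
  have e : Pᴴ * (1 + Qᴴ * J * Q) * P = cplx V + J := by
    have h3 : Pᴴ * Qᴴ = 1 := by rw [← conjTranspose_mul, hQP]; simp
    calc Pᴴ * (1 + Qᴴ * J * Q) * P = Pᴴ * P + (Pᴴ * Qᴴ) * J * (Q * P) := by noncomm_ring
      _ = _ := by rw [h3, hQP, hW]; simp
  rwa [e] at this

lemma eig_le {n : Type*} [Fintype n] [DecidableEq n] {M : Matrix n n ℂ} (hM : M.IsHermitian)
    (h : (1 + M).PosSemidef) (i : n) : -1 ≤ hM.eigenvalues i := by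
  have h0 := h.dotProduct_mulVec_nonneg ⇑(hM.eigenvectorBasis i)
  have h1 : star ⇑(hM.eigenvectorBasis i) ⬝ᵥ ⇑(hM.eigenvectorBasis i) = 1 := by
    rw [dotProduct_comm, ← EuclideanSpace.inner_eq_star_dotProduct, inner_self_eq_norm_sq_to_K,
      hM.eigenvectorBasis.orthonormal.1 i]; simp
  rw [Matrix.add_mulVec, hM.mulVec_eigenvectorBasis, Matrix.one_mulVec, dotProduct_add,
    dotProduct_smul, h1] at h0
  have h2 := (Complex.le_def.mp h0).1
  simp at h2
  linarith

lemma eig_ge {n : Type*} [Fintype n] [DecidableEq n] {M : Matrix n n ℂ} (hM : M.IsHermitian)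
    (h : (1 - M).PosSemidef) (i : n) : hM.eigenvalues i ≤ 1 := by
  have h0 := h.dotProduct_mulVec_nonneg ⇑(hM.eigenvectorBasis i)
  have h1 : star ⇑(hM.eigenvectorBasis i) ⬝ᵥ ⇑(hM.eigenvectorBasis i) = 1 := by
    rw [dotProduct_comm, ← EuclideanSpace.inner_eq_star_dotProduct, inner_self_eq_norm_sq_to_K,
      hM.eigenvectorBasis.orthonormal.1 i]; simp
  rw [Matrix.sub_mulVec, hM.mulVec_eigenvectorBasis, Matrix.one_mulVec, dotProduct_sub,
    dotProduct_smul, h1] at h0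
  have h2 := (Complex.le_def.mp h0).1
  simp at h2
  linarith

lemma fwd_pd {V : Matrix (Fin 2 ⊕ Fin 2) (Fin 2 ⊕ Fin 2) ℝ} (hV : Vᵀ = V)
    (h : (cplx V + Complex.I • cplx Omega2mode).PosSemidef) : V.PosDef := by
  rw [posDef_iff_dotProduct_mulVec]
  refine ⟨by rw [Matrix.IsHermitian, conjTranspose_eq_transpose_of_trivial, hV], ?_⟩
  intro x hx
  have hmv : (cplx V + Complex.I • cplx Omega2mode) *ᵥ (fun i => (x i : ℂ))
      = fun i => ((V *ᵥ x) i : ℂ) + Complex.I * ((Omega2mode *ᵥ x) i : ℂ) := by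
    ext i
    simp [Matrix.mulVec, dotProduct, cplx, add_mul, Finset.sum_add_distrib, mul_assoc]
    ring
  have hz : x ⬝ᵥ (Omega2mode *ᵥ x) = 0 := by
    simp [Matrix.mulVec, dotProduct, Omega2mode, omega2, Fin.sum_univ_succ]
    ring
  have hq : star (fun i => (x i : ℂ)) ⬝ᵥ
      ((cplx V + Complex.I • cplx Omega2mode) *ᵥ (fun i => (x i : ℂ)))
      = ((x ⬝ᵥ (V *ᵥ x) : ℝ) : ℂ) := by
    rw [hmv]
    have : ((x ⬝ᵥ (V *ᵥ x) : ℝ) : ℂ) = ((x ⬝ᵥ (V *ᵥ x) : ℝ) : ℂ)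
      + Complex.I * ((x ⬝ᵥ (Omega2mode *ᵥ x) : ℝ) : ℂ) := by rw [hz]; simp
    rw [this]
    simp only [dotProduct, Pi.star_apply, Complex.ofReal_sum, Complex.ofReal_mul, Finset.mul_sum,
      ← Finset.sum_add_distrib]
    refine Finset.sum_congr rfl fun i _ => ?_
    simp
    ring
  have h0 := h.dotProduct_mulVec_nonneg (fun i => (x i : ℂ))
  rw [hq] at h0
  have h0 : 0 ≤ x ⬝ᵥ (V *ᵥ x) := by exact_mod_cast h0
  rw [star_trivial]
  refine lt_of_le_of_ne h0 fun h1 => hx ?_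
  rw [← h1] at hq
  have h3 := (h.dotProduct_mulVec_zero_iff _).mp (by simpa using hq)
  rw [hmv] at h3
  have h4 : ∀ i, (Omega2mode *ᵥ x) i = 0 := fun i => by
    have := congrArg Complex.im (congrFun h3 i)
    simpa using this
  have a := h4 (Sum.inl 0)
  have b := h4 (Sum.inl 1)
  have c := h4 (Sum.inr 0)
  have d := h4 (Sum.inr 1)
  simp [Matrix.mulVec, dotProduct, Omega2mode, omega2] at a b c d
  ext i
  rcases i with i | i <;> fin_cases i <;> simp [a, b, c, d]

/-- Global-invariant genuineness criterion: V satisfies V + iΩ ≥ 0 iff V > 0,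
det V ≥ 1 and Δ(V) ≤ 1 + det V, where Δ(V) = det A + det B + 2 det C. -/
theorem genuineness_global_invariants (A B C : Matrix (Fin 2) (Fin 2) ℝ)
    (hA : Aᵀ = A) (hB : Bᵀ = B) :
    (cplx (Matrix.fromBlocks A C Cᵀ B) + Complex.I • cplx Omega2mode).PosSemidef
      ↔ ((Matrix.fromBlocks A C Cᵀ B).PosDef ∧
         1 ≤ (Matrix.fromBlocks A C Cᵀ B).det ∧
         A.det + B.det + 2 * C.det ≤ 1 + (Matrix.fromBlocks A C Cᵀ B).det) := by
  refine ⟨fun h => ?_, fun h => backward A B C hA hB h.1 h.2.1 h.2.2⟩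
  have hVT : (Matrix.fromBlocks A C Cᵀ B)ᵀ = Matrix.fromBlocks A C Cᵀ B := by
    rw [fromBlocks_transpose, hA, hB, transpose_transpose]
  have hV := fwd_pd hVT h
  have hf := detform A B C hA hB
  refine ⟨hV, ?_, ?_⟩
  · obtain ⟨P, Q, hPQ, hQP, hW⟩ := pd_normal hV
    have hT := h.transpose
    have hJ := J_herm
    have hJT := J_T
    have hWT : (cplx (Matrix.fromBlocks A C Cᵀ B))ᵀ = cplx (Matrix.fromBlocks A C Cᵀ B) :=
      congrArg cplx hVT
    rw [transpose_add, hWT, hJT] at hT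
    set V := Matrix.fromBlocks A C Cᵀ B
    set J := Complex.I • cplx Omega2mode
    have hM : (Qᴴ * J * Q).IsHermitian := isHermitian_conjTranspose_mul_mul Q hJ
    have p1 : (1 + Qᴴ * J * Q).PosSemidef := by
      have e := norm_J (J := J) hPQ hW 1
      rw [one_smul, one_smul] at e
      rw [← e]
      exact h.conjTranspose_mul_mul_same Q
    have p2 : (1 - Qᴴ * J * Q).PosSemidef := by
      have e := norm_J (J := -J) hPQ hW 1
      rw [one_smul, one_smul, Matrix.mul_neg, Matrix.neg_mul] at e
      rw [sub_eq_add_neg, ← e]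
      exact hT.conjTranspose_mul_mul_same Q
    have hdet := hM.det_eq_prod_eigenvalues
    have hJd := hf 0
    simp only [Complex.ofReal_zero, zero_smul, zero_add] at hJd
    have hVd : ((V.det : ℝ) : ℂ) = star P.det * P.det := by
      rw [← det_conjTranspose, ← det_mul, ← hW]
      exact RingHom.map_det Complex.ofRealHom V
    have hQ : P.det * Q.det = 1 := by rw [← det_mul, hPQ, det_one]
    have hQs : star P.det * star Q.det = 1 := by
      rw [mul_comm, ← star_mul, hQ, star_one]
    have key : ((V.det * ∏ i, hM.eigenvalues i : ℝ) : ℂ) = 1 := by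
      rw [Complex.ofReal_mul, Complex.ofReal_prod]
      change ((V.det : ℝ) : ℂ) * ∏ i, ((hM.eigenvalues i : ℝ) : ℂ) = 1
      have hdet' : (Qᴴ * J * Q).det = ∏ i, ((hM.eigenvalues i : ℝ) : ℂ) := hdet
      rw [← hdet', det_mul, det_mul, hJd, det_conjTranspose, hVd]
      norm_num
      calc _ = (star P.det * star Q.det) * (P.det * Q.det) := by
            simp only [Complex.star_def]; ring
        _ = 1 := by rw [hQ, hQs, one_mul]
    have key : V.det * ∏ i, hM.eigenvalues i = 1 := by exact_mod_cast key
    have hle : |∏ i, hM.eigenvalues i| ≤ 1 := by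
      rw [Finset.abs_prod]
      exact Finset.prod_le_one (fun i _ => abs_nonneg _)
        fun i _ => abs_le.mpr ⟨eig_le hM p1 i, eig_ge hM p2 i⟩
    have hpos := hV.det_pos
    have := (abs_le.mp hle).2
    nlinarith
  · have h0 := h.det_nonneg
    have h1 := hf 1
    rw [Complex.ofReal_one, one_smul] at h1
    rw [h1] at h0
    have h0 : (0 : ℝ) ≤ 1^4 * (Matrix.fromBlocks A C Cᵀ B).det
      - 1^2 * (A.det + B.det + 2 * C.det) + 1 := by exact_mod_cast h0
    linarith
end

section
/- Williamson's theorem: for every 2n×2n real positive definite matrix V, there exists a real symplectic matrix S (SΩS^T = Ω) such that SVS^T = diag(ν₁,ν₁,…,ν_n,ν_n) with all ν_k > 0. -/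
open Matrix

/-- The standard symplectic form Ω = ⊕ₖ ω on 2n dimensions, indexed by `Fin n × Fin 2`. -/
def OmegaStd (n : ℕ) : Matrix (Fin n × Fin 2) (Fin n × Fin 2) ℝ :=
  Matrix.of fun p q => if p.1 = q.1 then omega2 p.2 q.2 else 0

open scoped MatrixOrder

theorem skew_normal_form (n : ℕ) : ∀ (E : Type) [NormedAddCommGroup E] [InnerProductSpace ℝ E]
    [FiniteDimensional ℝ E] (A : E →ₗ[ℝ] E) (_ : ∀ x y, inner ℝ (A x) y = - inner ℝ x (A y))
    (_ : ∀ x, A x = 0 → x = 0) (_ : Module.finrank ℝ E = 2 * n),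
    ∃ (e : Fin n → Fin 2 → E) (l : Fin n → ℝ), (∀ k, 0 < l k) ∧
      (∀ k m i j, inner ℝ (e k i) (e m j) = if k = m ∧ i = j then (1 : ℝ) else 0) ∧
      (∀ k m i j, inner ℝ (e k i) (A (e m j)) = if k = m then l k * omega2 i j else 0) := by
  induction n with
  | zero =>
    intro E _ _ _ A _ _ _
    exact ⟨fun k => k.elim0, fun k => k.elim0, fun k => k.elim0, fun k => k.elim0,
      fun k => k.elim0⟩
  | succ n ih =>
    intro E _ _ _ A hA hinj hdim
    have hsym : (A ∘ₗ A).IsSymmetric := by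
      intro x y
      simp [hA]
    have h0 : 0 < Module.finrank ℝ E := by omega
    obtain ⟨u, mu, hu, hAu⟩ : ∃ (u : E) (mu : ℝ), ‖u‖ = 1 ∧ A (A u) = mu • u :=
      ⟨hsym.eigenvectorBasis rfl ⟨0, h0⟩, hsym.eigenvalues rfl ⟨0, h0⟩,
        (hsym.eigenvectorBasis rfl).orthonormal.1 _,
        hsym.apply_eigenvectorBasis rfl ⟨0, h0⟩⟩
    have huu : inner ℝ u u = (1 : ℝ) := by rw [real_inner_self_eq_norm_sq, hu]; norm_num
    have hAu0 : A u ≠ 0 := fun h => by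
      have := hinj u h
      simp [this] at hu
    set a := ‖A u‖ with ha
    have hapos : 0 < a := norm_pos_iff.2 hAu0
    have hmu : mu = - a ^ 2 := by
      have h1 : inner ℝ (A (A u)) u = - a ^ 2 := by
        rw [hA, real_inner_self_eq_norm_sq]
      rw [hAu, inner_smul_left, huu] at h1
      simpa using h1
    have huA : inner ℝ u (A u) = (0 : ℝ) := by
      have := hA u u
      rw [real_inner_comm] at this
      linarith
    obtain ⟨v, hv⟩ : ∃ v, v = (-a⁻¹) • A u := ⟨_, rfl⟩
    have hAv : A v = a • u := by
      rw [hv, map_smul, hAu, hmu, smul_smul]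
      congr 1
      field_simp
    have hAu' : A u = (-a) • v := by
      rw [hv, smul_smul]
      have : -a * -a⁻¹ = 1 := by field_simp
      rw [this, one_smul]
    have huv : inner ℝ u v = (0 : ℝ) := by
      rw [hv, inner_smul_right, huA, mul_zero]
    have hvu : inner ℝ v u = (0 : ℝ) := by rw [real_inner_comm, huv]
    have hvv : inner ℝ v v = (1 : ℝ) := by
      rw [hv, inner_smul_right, inner_smul_left, real_inner_self_eq_norm_sq, ← ha]
      simp
      field_simp
    let b : Fin 2 → E := ![u, v]
    have hb : Orthonormal ℝ b := by
      rw [orthonormal_iff_ite]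
      intro i j
      fin_cases i <;> fin_cases j <;> simp [b, huu, huv, hvu, hvv, hu]
      rw [norm_eq_sqrt_real_inner, hvv]; simp
    have hbA : ∀ i j, inner ℝ (b i) (A (b j)) = a * omega2 i j := by
      intro i j
      fin_cases i <;> fin_cases j <;>
        simp [b, hAv, hAu', omega2, inner_smul_right, huu, huv, hvu, hvv, -inner_self_eq_norm_sq_to_K]
    let K := Submodule.span ℝ (Set.range b)
    have hK : Module.finrank ℝ K = 2 := by
      simpa using finrank_span_eq_card hb.linearIndependent
    have hK' : Module.finrank ℝ Kᗮ = 2 * n := by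
      have := K.finrank_add_finrank_orthogonal
      omega
    have hmem : ∀ x, x ∈ Kᗮ ↔ ∀ i, inner ℝ (b i) x = (0 : ℝ) := by
      intro x
      constructor
      · intro h i
        exact (Submodule.mem_orthogonal _ _).1 h _ (Submodule.subset_span ⟨i, rfl⟩)
      · intro h
        rw [Submodule.mem_orthogonal]
        intro y hy
        induction hy using Submodule.span_induction with
        | mem y hy => obtain ⟨i, rfl⟩ := hy; exact h i
        | zero => simp
        | add y z _ _ hy hz => rw [inner_add_left, hy, hz, add_zero]
        | smul c y _ hy => rw [inner_smul_left, hy, mul_zero]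
    have hbAx : ∀ x ∈ Kᗮ, ∀ i, inner ℝ (b i) (A x) = (0 : ℝ) := by
      intro x hx i
      have h := (hmem x).1 hx
      have h1 := h 0
      have h2 := h 1
      have := hA (b i) x
      have h3 : inner ℝ (A (b i)) x = (0 : ℝ) := by
        fin_cases i
        · simp only [b] at *
          simp at h1 h2 ⊢
          rw [hAu', inner_smul_left, h2, mul_zero]
        · simp only [b] at *
          simp at h1 h2 ⊢
          rw [hAv, inner_smul_left, h1, mul_zero]
      linarith
    have hinv : ∀ x ∈ Kᗮ, A x ∈ Kᗮ := fun x hx => (hmem _).2 (hbAx x hx)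
    obtain ⟨e, l, hl, he, heA⟩ := ih Kᗮ (A.restrict hinv)
      (fun x y => by simpa using hA x y)
      (fun x hx => by
        have : A x = 0 := by simpa using congrArg Subtype.val hx
        exact Subtype.ext (hinj _ this)) hK'
    have hbe : ∀ i k j, inner ℝ (b i) (e k j : E) = (0 : ℝ) := fun i k j =>
      (hmem _).1 (e k j).2 i
    refine ⟨Fin.cons b (fun k i => (e k i : E)), Fin.cons a l, ?_, ?_, ?_⟩
    · intro k
      refine Fin.cases ?_ (fun k => ?_) k
      · simpa using hapos
      · simpa using hl k
    · intro k m i j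
      refine Fin.cases ?_ (fun k => ?_) k <;> refine Fin.cases ?_ (fun m => ?_) m
      · simpa using (orthonormal_iff_ite.1 hb) i j
      · simpa [(Fin.succ_ne_zero _).symm] using hbe i m j
      · rw [real_inner_comm]
        simpa [Fin.succ_ne_zero] using hbe j k i
      · simpa using he k m i j
    · intro k m i j
      refine Fin.cases ?_ (fun k => ?_) k <;> refine Fin.cases ?_ (fun m => ?_) m
      · simpa using hbA i j
      · simpa [(Fin.succ_ne_zero _).symm] using hbAx _ (e m j).2 i
      · have h1 := hA (e k i) (b j)
        have h2 := (hmem _).1 (hinv _ (e k i).2) j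
        rw [real_inner_comm] at h2
        simp [Fin.succ_ne_zero]
        linarith
      · simpa using heA k m i j

/-- Williamson's theorem: every real positive definite matrix V of even size can be
symplectically diagonalized, SVSᵀ = diag(ν₁,ν₁,…,ν_n,ν_n) with νₖ > 0. -/
theorem williamson (n : ℕ) (V : Matrix (Fin n × Fin 2) (Fin n × Fin 2) ℝ)
    (hV : V.PosDef) :
    ∃ (S : Matrix (Fin n × Fin 2) (Fin n × Fin 2) ℝ) (ν : Fin n → ℝ),
      S * OmegaStd n * Sᵀ = OmegaStd n ∧ (∀ k, 0 < ν k) ∧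
      S * V * Sᵀ = Matrix.diagonal (fun p => ν p.1) := by
  have hO : (OmegaStd n)ᵀ = - OmegaStd n := by
    ext ⟨k, i⟩ ⟨m, j⟩
    by_cases h : k = m
    · subst h
      fin_cases i <;> fin_cases j <;> simp [OmegaStd, omega2]
    · simp [OmegaStd, h, Ne.symm h]
  have hO2 : OmegaStd n * OmegaStd n = -1 := by
    ext ⟨k, i⟩ ⟨m, j⟩
    rw [Matrix.mul_apply, Fintype.sum_prod_type, Finset.sum_eq_single k]
    · by_cases h : k = m
      · subst h
        fin_cases i <;> fin_cases j <;> simp [OmegaStd, omega2]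
      · simp [OmegaStd, h]
    · intro x _ hx
      simp [OmegaStd, Ne.symm hx]
    · simp
  obtain ⟨B, hB⟩ : ∃ B : Matrix (Fin n × Fin 2) (Fin n × Fin 2) ℝ, V = Bᵀ * B := by
    obtain ⟨B, hB⟩ := CStarAlgebra.nonneg_iff_eq_star_mul_self.1 hV.posSemidef.nonneg
    exact ⟨B, by simpa [Matrix.star_eq_conjTranspose] using hB⟩
  have hBu : IsUnit B.det := by
    have := (Matrix.isUnit_iff_isUnit_det _).1 hV.isUnit
    rw [hB, Matrix.det_mul] at this
    exact isUnit_of_mul_isUnit_right this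
  obtain ⟨C, hC⟩ : ∃ C, C = (B⁻¹)ᵀ := ⟨_, rfl⟩
  have hBC : B * Cᵀ = 1 := by rw [hC, Matrix.transpose_transpose, Matrix.mul_nonsing_inv _ hBu]
  have hCB : C * Bᵀ = 1 := by
    rw [← Matrix.transpose_one, ← hBC, Matrix.transpose_mul, Matrix.transpose_transpose]
  have hCV : C * V * Cᵀ = 1 := by
    rw [hB, ← Matrix.mul_assoc, hCB, Matrix.one_mul, hBC]
  obtain ⟨X, hX⟩ : ∃ X, X = C * OmegaStd n * Cᵀ := ⟨_, rfl⟩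
  have hXt : Xᵀ = -X := by
    simp [hX, Matrix.transpose_mul, hO, Matrix.mul_assoc]
  have hXinv : (B * -OmegaStd n * Bᵀ) * X = 1 := by
    have hBC' : Bᵀ * C = 1 := mul_eq_one_comm.1 hCB
    calc (B * -OmegaStd n * Bᵀ) * X = B * -OmegaStd n * (Bᵀ * C) * OmegaStd n * Cᵀ := by
          rw [hX]; simp only [Matrix.mul_assoc]
      _ = B * -(OmegaStd n * OmegaStd n) * Cᵀ := by
          rw [hBC', Matrix.mul_one]; simp [Matrix.mul_assoc]
      _ = 1 := by rw [hO2]; simpa using hBC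
  have hin : ∀ x y : EuclideanSpace ℝ (Fin n × Fin 2), inner ℝ x y = x.ofLp ⬝ᵥ y.ofLp := by
    intro x y
    rw [EuclideanSpace.inner_eq_star_dotProduct, dotProduct_comm]; simp
  obtain ⟨e, l, hl, he, heA⟩ := skew_normal_form n (EuclideanSpace ℝ (Fin n × Fin 2))
    (Matrix.toLpLin 2 2 X)
    (by
      intro x y
      rw [hin, hin, Matrix.toLpLin_apply, Matrix.toLpLin_apply, Matrix.dotProduct_mulVec,
        ← Matrix.mulVec_transpose, hXt, Matrix.neg_mulVec, neg_dotProduct, neg_neg])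
    (by
      intro x hx
      rw [Matrix.toLpLin_apply] at hx
      have h1 : X *ᵥ x.ofLp = 0 := by simpa using congrArg WithLp.ofLp hx
      have h2 : x.ofLp = 0 := by
        rw [← Matrix.one_mulVec x.ofLp, ← hXinv, ← Matrix.mulVec_mulVec, h1, Matrix.mulVec_zero]
      ext i
      simp [h2])
    (by simp [mul_comm])
  let R : Matrix (Fin n × Fin 2) (Fin n × Fin 2) ℝ := Matrix.of fun p => (e p.1 p.2).ofLp
  have hR : R * Rᵀ = 1 := by
    ext p q
    have := he p.1 q.1 p.2 q.2
    rw [hin] at this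
    rw [Matrix.one_apply, Matrix.mul_apply]
    simpa [Prod.ext_iff, dotProduct, R] using this
  have hRX : R * X * Rᵀ = Matrix.of fun p q => if p.1 = q.1 then l p.1 * omega2 p.2 q.2 else 0 := by
    ext p q
    have := heA p.1 q.1 p.2 q.2
    rw [hin, Matrix.toLpLin_apply] at this
    rw [Matrix.of_apply, ← this, Matrix.mul_assoc, Matrix.mul_apply]
    simp [dotProduct, R, Matrix.mul_apply, Matrix.mulVec]
  let D : Matrix (Fin n × Fin 2) (Fin n × Fin 2) ℝ := Matrix.diagonal fun p => (√(l p.1))⁻¹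
  have hDt : Dᵀ = D := Matrix.diagonal_transpose _
  refine ⟨D * R * C, fun k => (l k)⁻¹, ?_, fun k => inv_pos.2 (hl k), ?_⟩
  · have : D * R * C * OmegaStd n * (D * R * C)ᵀ = D * (R * X * Rᵀ) * D := by
      rw [hX, Matrix.transpose_mul, Matrix.transpose_mul, hDt]
      simp only [Matrix.mul_assoc]
    rw [this, hRX]
    ext p q
    rw [Matrix.mul_diagonal, Matrix.diagonal_mul]
    by_cases h : p.1 = q.1
    · have h1 : √(l q.1) ≠ 0 := (Real.sqrt_pos.2 (hl _)).ne'
      have h2 := Real.mul_self_sqrt (hl q.1).le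
      simp only [OmegaStd, Matrix.of_apply, h, if_true]
      nth_rewrite 2 [← h2]
      field_simp
    · simp [OmegaStd, h]
  · have : D * R * C * V * (D * R * C)ᵀ = D * (R * (C * V * Cᵀ) * Rᵀ) * D := by
      rw [Matrix.transpose_mul, Matrix.transpose_mul, hDt]
      simp only [Matrix.mul_assoc]
    rw [this, hCV, Matrix.mul_one, hR, Matrix.mul_one, Matrix.diagonal_mul_diagonal]
    congr 1
    ext p
    rw [← mul_inv, Real.mul_self_sqrt (hl _).le]
end
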